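/- Assume that X is uniformly perfect at the base point a for radii ≥ 1 and that μ is doubling on X, and let q > 0. Then μ̂_q is doubling on (X̂, d̂) if and only if there exist 0 < s < q and C_s > 0 such that μ(B(a,r))/μ(B(a,R)) ≥ C_s (r/R)^s whenever 1 ≤ r ≤ R < ∞. -/

import Mathlib

open Metric Set MeasureTheory Filter
open scoped ENNReal NNReal

noncomputable section

variable {X : Type*}

/-- The quasimetric `d_a` on the sphericalization `X̂ = X ∪ {∞}`, with `none` playing
the role of the point `∞`. -/
noncomputable def sphDist [MetricSpace X] (a : X) : Option X → Option X → ℝ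
  | some x, some y => dist x y / ((1 + dist x a) * (1 + dist y a))
  | some x, none => 1 / (1 + dist x a)
  | none, some y => 1 / (1 + dist y a)
  | none, none => 0

/-- The sum `Σ_{j=1}^k d_a(x_{j-1}, x_j)` along a finite sequence (list) in `X̂`. -/
noncomputable def chainSum [MetricSpace X] (a : X) : List (Option X) → ℝ
  | [] => 0
  | [_] => 0
  | x :: y :: l => sphDist a x y + chainSum a (y :: l)

/-- The sphericalized distance `d̂(x,y) = inf Σ_{j=1}^k d_a(x_{j-1},x_j)`, the infimum
being taken over all finite sequences `x = x_0, x_1, …, x_k = y` in `X̂`. -/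
noncomputable def sphHatDist [MetricSpace X] (a : X) (x y : Option X) : ℝ :=
  sInf {s : ℝ | ∃ L : List (Option X),
    L.head? = some x ∧ L.getLast? = some y ∧ chainSum a L = s}

/-- `d̂(x) = d̂(x,∞) = 1/(1+|x|)` for `x ∈ X`. -/
noncomputable def sphD [MetricSpace X] (a x : X) : ℝ := 1 / (1 + dist x a)

/-- `d̂(x) = d̂(x,∞)` on all of `X̂`, with the convention `d̂(∞) = 0`. -/
noncomputable def sphDhat [MetricSpace X] (a : X) : Option X → ℝ
  | none => 0
  | some x => sphD a x

/-- The sphericalized measure `μ̂_q` on `X̂`: `dμ̂_q(x) = (1+|x|)^{-q} dμ(x)` on `X`,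
and `μ̂_q({∞}) = 0`.  Here `sphMeas a q μ S` is the value `μ̂_q(S)` for `S ⊆ X̂`. -/
noncomputable def sphMeas [MetricSpace X] [MeasurableSpace X] (a : X) (q : ℝ)
    (μ : Measure X) (S : Set (Option X)) : ℝ≥0∞ :=
  ∫⁻ x in (Option.some ⁻¹' S), ENNReal.ofReal (((1 + dist x a) ^ q)⁻¹) ∂μ

/-! The metric `d̂` is comparable to the quasimetric `d_a`, so `μ̂_q` may be tested on the balls of
`d_a`. Write `tail t` for the `μ̂_q`-measure of `{1 + |x| ≥ t}`. A `d_a`-ball much smaller than the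
distance `1 / (1 + |x|)` from its centre `x` to `∞` is comparable to a ball of `X`, on which the
density of `μ̂_q` is nearly constant; a much larger one of radius `r` is comparable to
`{1 + |x| ≥ 1 / r}`. In these two regimes the doubling of `μ` and uniform perfectness
suffice, and the transition between them is doubling exactly when `tail t ≲ t ^ (-q) * μ(B(a, t))`
for `t ≥ 1`.

The converse estimate always holds, even with `tail t` replaced by the measure of an annulus
`{t ≤ 1 + |x| < b * t}`, because uniform perfectness puts a ball of radius `t` into it. Hence under
the doubling condition each annulus carries a fixed proportion of its tail, so `tail` and with it
`t ^ (-q) * μ(B(a, t))` decay at least like a power `t ^ (-ε)`; conversely such a decay makes the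
sum over dyadic annuli geometric. With `s = q - ε` this is the growth condition on `μ(B(a, ·))`. -/

section Domination

variable {ι κ : Type*} {s t : Set ι} {f g h f' g' : ι → ℝ≥0∞}

/-- Domination on `s` up to a multiplicative constant: `f i ≤ C * g i` for all `i ∈ s`, with one
finite constant `C`. -/
def Dominated (s : Set ι) (f g : ι → ℝ≥0∞) : Prop :=
  ∃ C : ℝ≥0, ∀ i ∈ s, f i ≤ C * g i

notation:50 f:51 " ≲[" s "] " g:51 => Dominated s f g

namespace Dominated

lemma of_le (hfg : ∀ i ∈ s, f i ≤ g i) : f ≲[s] g :=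
  ⟨1, fun i hi => by simpa using hfg i hi⟩

lemma trans (hfg : f ≲[s] g) (hgh : g ≲[s] h) : f ≲[s] h := by
  obtain ⟨C, hC⟩ := hfg
  obtain ⟨D, hD⟩ := hgh
  refine ⟨C * D, fun i hi => ?_⟩
  calc f i ≤ C * g i := hC i hi
    _ ≤ C * (D * h i) := by gcongr; exact hD i hi
    _ = (C * D : ℝ≥0) * h i := by rw [ENNReal.coe_mul, mul_assoc]

instance : Trans (Dominated s) (Dominated s) (Dominated s) := ⟨Dominated.trans⟩

lemma mono (hfg : f ≲[t] g) (hst : s ⊆ t) : f ≲[s] g :=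
  hfg.imp fun _ hC i hi => hC i (hst hi)

lemma union (hs : f ≲[s] g) (ht : f ≲[t] g) : f ≲[s ∪ t] g := by
  obtain ⟨C, hC⟩ := hs
  obtain ⟨D, hD⟩ := ht
  refine ⟨max C D, ?_⟩
  rintro i (hi | hi)
  · exact (hC i hi).trans (by gcongr; exact le_max_left C D)
  · exact (hD i hi).trans (by gcongr; exact le_max_right C D)

lemma comp {φ : κ → ι} {u : Set κ} (hfg : f ≲[s] g) (hφ : MapsTo φ u s) :
    (fun k => f (φ k)) ≲[u] fun k => g (φ k) :=
  hfg.imp fun _ hC k hk => hC (φ k) (hφ hk)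

lemma image {φ : κ → ι} {u : Set κ} (hfg : (fun k => f (φ k)) ≲[u] fun k => g (φ k)) :
    f ≲[φ '' u] g :=
  hfg.imp fun _ hC => forall_mem_image.2 hC

lemma add (hfh : f ≲[s] h) (hgh : g ≲[s] h) : (fun i => f i + g i) ≲[s] h := by
  obtain ⟨C, hC⟩ := hfh
  obtain ⟨D, hD⟩ := hgh
  refine ⟨C + D, fun i hi => (add_le_add (hC i hi) (hD i hi)).trans_eq ?_⟩
  rw [ENNReal.coe_add, add_mul]

lemma mul (hfg : f ≲[s] g) (hfg' : f' ≲[s] g') :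
    (fun i => f i * f' i) ≲[s] fun i => g i * g' i := by
  obtain ⟨C, hC⟩ := hfg
  obtain ⟨D, hD⟩ := hfg'
  refine ⟨C * D, fun i hi => (mul_le_mul' (hC i hi) (hD i hi)).trans_eq ?_⟩
  rw [ENNReal.coe_mul, mul_mul_mul_comm]

lemma ofReal_rpow_neg {u v : ι → ℝ} {c q : ℝ} (hc : 0 < c) (hq : 0 ≤ q)
    (hv : ∀ i ∈ s, 0 < v i) (hvu : ∀ i ∈ s, v i ≤ c * u i) :
    (fun i => ENNReal.ofReal (u i ^ (-q))) ≲[s] fun i => ENNReal.ofReal (v i ^ (-q)) := by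
  refine ⟨(c ^ q).toNNReal, fun i hi => ?_⟩
  have hu : 0 < u i := pos_of_mul_pos_right ((hv i hi).trans_le (hvu i hi)) hc.le
  change _ ≤ ENNReal.ofReal (c ^ q) * _
  rw [← ENNReal.ofReal_mul (by positivity)]
  refine ENNReal.ofReal_le_ofReal ?_
  calc u i ^ (-q) = c ^ q * (c * u i) ^ (-q) := by
        rw [Real.mul_rpow hc.le hu.le, ← mul_assoc, ← Real.rpow_add hc, add_neg_cancel,
          Real.rpow_zero, one_mul]
    _ ≤ c ^ q * v i ^ (-q) := by
        gcongr ?_ * ?_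
        exact Real.rpow_le_rpow_of_nonpos (hv i hi) (hvu i hi) (neg_nonpos.2 hq)

lemma tsum_pow_mul {F G : ℝ → ℝ≥0∞} {b : ℝ} (hb : 1 ≤ b) (hFG : F ≲[Ici 1] G) :
    (fun t => ∑' n : ℕ, F (b ^ n * t)) ≲[Ici 1] fun t => ∑' n : ℕ, G (b ^ n * t) := by
  obtain ⟨C, hC⟩ := hFG
  refine ⟨C, fun t ht => ?_⟩
  rw [← ENNReal.tsum_mul_left]
  exact ENNReal.tsum_le_tsum fun n =>
    hC _ (one_le_mul_of_one_le_of_one_le (one_le_pow₀ hb) ht)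

end Dominated

/-- A family of functions of a radius is doubling if doubling the radius costs at most a constant
factor, uniformly over the family. -/
def IsDoubling (f : ι → ℝ → ℝ≥0∞) : Prop :=
  (fun p : ι × ℝ => f p.1 (2 * p.2)) ≲[{p | 0 < p.2}] fun p => f p.1 p.2

lemma isDoubling_iff_exists_ofReal {f : ι → ℝ → ℝ≥0∞} :
    IsDoubling f ↔ ∃ C : ℝ, 1 < C ∧ ∀ (i : ι) (r : ℝ), 0 < r →
      f i (2 * r) ≤ ENNReal.ofReal C * f i r := by
  constructor
  · rintro ⟨C, hC⟩
    refine ⟨C + 2, by linarith [C.coe_nonneg], fun i r hr => (hC (i, r) hr).trans ?_⟩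
    gcongr
    rw [← ENNReal.ofReal_coe_nnreal]
    exact ENNReal.ofReal_le_ofReal (by linarith)
  · rintro ⟨C, -, hC⟩
    exact ⟨C.toNNReal, fun p hp => hC p.1 p.2 hp⟩

lemma IsDoubling.dominated {f : ι → ℝ → ℝ≥0∞} (hf : IsDoubling f) (hmono : ∀ i, Monotone (f i))
    {u : Set κ} {x : κ → ι} {r r' : κ → ℝ} (K : ℝ) (hr' : ∀ k ∈ u, 0 < r' k)
    (hr : ∀ k ∈ u, r k ≤ K * r' k) :
    (fun k => f (x k) (r k)) ≲[u] fun k => f (x k) (r' k) := by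
  have hpow (n : ℕ) : (fun k => f (x k) (2 ^ n * r' k)) ≲[u] fun k => f (x k) (r' k) := by
    induction n with
    | zero => exact .of_le fun k _ => by simp
    | succ n ih =>
      have hstep : (fun k => f (x k) (2 * (2 ^ n * r' k))) ≲[u] fun k => f (x k) (2 ^ n * r' k) :=
        hf.comp (φ := fun k => (x k, 2 ^ n * r' k)) fun k hk =>
          mul_pos (by positivity) (hr' k hk)
      simpa only [pow_succ', mul_assoc] using hstep.trans ih
  obtain ⟨n, hn⟩ := pow_unbounded_of_one_lt K (one_lt_two : (1 : ℝ) < 2)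
  refine (Dominated.of_le fun k hk => hmono _ ?_).trans (hpow n)
  exact (hr k hk).trans (mul_le_mul_of_nonneg_right hn.le (hr' k hk).le)

lemma IsDoubling.of_le_dilate {f g : ι → ℝ → ℝ≥0∞} (hf : IsDoubling f)
    (hmono : ∀ i, Monotone (f i)) {M : ℝ} (hM : 0 < M) (hgf : ∀ i r, g i r ≤ f i (M * r))
    (hfg : ∀ i r, f i r ≤ g i (M * r)) : IsDoubling g :=
  calc (fun p : ι × ℝ => g p.1 (2 * p.2))
      ≲[{p | 0 < p.2}] fun p => f p.1 (M * (2 * p.2)) := .of_le fun p _ => hgf p.1 _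
    _ ≲[{p | 0 < p.2}] fun p => f p.1 (M⁻¹ * p.2) :=
      hf.dominated hmono (2 * M ^ 2) (fun p hp => mul_pos (inv_pos.2 hM) hp)
        fun p _ => le_of_eq (by field_simp)
    _ ≲[{p | 0 < p.2}] fun p => g p.1 p.2 :=
      .of_le fun p _ => (hfg p.1 _).trans_eq (by rw [mul_inv_cancel_left₀ hM.ne'])

end Domination

section Growth

variable {f g : ℝ → ℝ≥0∞} {α β : ℝ}

/-- `f` grows at most with exponent `α` (which may be negative) on `[1, ∞)`: up to a constant,
`f R / f r ≤ (R / r) ^ α` for all `1 ≤ r ≤ R`. -/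
def GrowthLE (α : ℝ) (f : ℝ → ℝ≥0∞) : Prop :=
  ∃ C : ℝ≥0, ∀ r R : ℝ, 1 ≤ r → r ≤ R → f R ≤ C * ENNReal.ofReal ((R / r) ^ α) * f r

lemma growthLE_iff_exists_ofReal_mul_le :
    GrowthLE α f ↔ ∃ c : ℝ, 0 < c ∧ ∀ r R : ℝ, 1 ≤ r → r ≤ R →
      ENNReal.ofReal (c * (r / R) ^ α) * f R ≤ f r := by
  have hinv {r R : ℝ} (hr : 1 ≤ r) (hR : r ≤ R) : (r / R) ^ α * (R / r) ^ α = 1 := by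
    have : 0 < r := by linarith
    have : 0 < R := by linarith
    rw [← Real.mul_rpow (by positivity) (by positivity), div_mul_div_cancel₀ (by positivity),
      div_self (by positivity), Real.one_rpow]
  constructor
  · rintro ⟨C, hC⟩
    refine ⟨(C + 1 : ℝ)⁻¹, by positivity, fun r R hr hR => ?_⟩
    have : 0 ≤ r / R := div_nonneg (by linarith) (by linarith)
    calc ENNReal.ofReal ((C + 1 : ℝ)⁻¹ * (r / R) ^ α) * f R
        ≤ ENNReal.ofReal ((C + 1 : ℝ)⁻¹ * (r / R) ^ α) *
            (ENNReal.ofReal C * ENNReal.ofReal ((R / r) ^ α) * f r) := by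
          rw [ENNReal.ofReal_coe_nnreal]
          gcongr
          exact hC r R hr hR
      _ = ENNReal.ofReal ((C + 1 : ℝ)⁻¹ * C * ((r / R) ^ α * (R / r) ^ α)) * f r := by
          rw [← ENNReal.ofReal_mul (by positivity), ← mul_assoc,
            ← ENNReal.ofReal_mul (by positivity), mul_mul_mul_comm]
      _ ≤ 1 * f r := by
          rw [hinv hr hR, mul_one]
          gcongr
          refine ENNReal.ofReal_le_one.2 ?_
          rw [inv_mul_le_one₀ (by positivity)]
          linarith
      _ = f r := one_mul _
  · rintro ⟨c, hc, h⟩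
    refine ⟨c⁻¹.toNNReal, fun r R hr hR => ?_⟩
    have : 0 ≤ R / r := div_nonneg (by linarith) (by linarith)
    calc f R = ENNReal.ofReal (c⁻¹ * (R / r) ^ α * (c * (r / R) ^ α)) * f R := by
          rw [mul_mul_mul_comm, inv_mul_cancel₀ hc.ne', mul_comm (_ ^ α), hinv hr hR]
          simp
      _ = ENNReal.ofReal c⁻¹ * ENNReal.ofReal ((R / r) ^ α) *
            (ENNReal.ofReal (c * (r / R) ^ α) * f R) := by
          rw [ENNReal.ofReal_mul (by positivity), ENNReal.ofReal_mul (by positivity), mul_assoc]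
      _ ≤ ENNReal.ofReal c⁻¹ * ENNReal.ofReal ((R / r) ^ α) * f r := by
          gcongr
          exact h r R hr hR

lemma GrowthLE.congr (hf : GrowthLE α f) (hfg : f ≲[Ici 1] g) (hgf : g ≲[Ici 1] f) :
    GrowthLE α g := by
  obtain ⟨C, hC⟩ := hf
  obtain ⟨D, hD⟩ := hfg
  obtain ⟨E, hE⟩ := hgf
  refine ⟨E * C * D, fun r R hr hR => ?_⟩
  calc g R ≤ E * f R := hE R (hr.trans hR)
    _ ≤ E * (C * ENNReal.ofReal ((R / r) ^ α) * (D * g r)) := by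
        gcongr
        exact (hC r R hr hR).trans (by gcongr; exact hD r hr)
    _ = (E * C * D : ℝ≥0) * ENNReal.ofReal ((R / r) ^ α) * g r := by push_cast; ring

lemma GrowthLE.mul (hf : GrowthLE α f) (hg : GrowthLE β g) :
    GrowthLE (α + β) fun t => f t * g t := by
  obtain ⟨C, hC⟩ := hf
  obtain ⟨D, hD⟩ := hg
  refine ⟨C * D, fun r R hr hR => (mul_le_mul' (hC r R hr hR) (hD r R hr hR)).trans_eq ?_⟩
  have : 0 < R / r := div_pos (by linarith) (by linarith)
  rw [Real.rpow_add this, ENNReal.ofReal_mul (by positivity), ENNReal.coe_mul]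
  ring

lemma growthLE_ofReal_rpow (α : ℝ) : GrowthLE α fun t => ENNReal.ofReal (t ^ α) := by
  refine ⟨1, fun r R hr hR => le_of_eq ?_⟩
  have hr0 : 0 < r := by linarith
  have hRr : 0 ≤ R / r := div_nonneg (by linarith) hr0.le
  rw [ENNReal.coe_one, one_mul, ← ENNReal.ofReal_mul (by positivity),
    ← Real.mul_rpow hRr hr0.le, div_mul_cancel₀ R hr0.ne']

lemma growthLE_ofReal_rpow_mul_iff :
    GrowthLE (β + α) (fun t => ENNReal.ofReal (t ^ β) * f t) ↔ GrowthLE α f := by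
  refine ⟨fun h => ?_, (growthLE_ofReal_rpow β).mul⟩
  have hcancel : ∀ t ∈ Ici (1 : ℝ),
      ENNReal.ofReal (t ^ (-β)) * (ENNReal.ofReal (t ^ β) * f t) = f t := fun t ht => by
    have ht0 : 0 < t := one_pos.trans_le ht
    rw [← mul_assoc, ← ENNReal.ofReal_mul (by positivity), ← Real.rpow_add ht0, neg_add_cancel,
      Real.rpow_zero, ENNReal.ofReal_one, one_mul]
  have hmul := (growthLE_ofReal_rpow (-β)).mul h
  rw [neg_add_cancel_left] at hmul
  exact hmul.congr (.of_le fun t ht => (hcancel t ht).le) (.of_le fun t ht => (hcancel t ht).ge)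

lemma GrowthLE.tsum_dominated {ε b : ℝ} (hf : GrowthLE (-ε) f) (hε : 0 < ε) (hb : 1 < b) :
    (fun t => ∑' n : ℕ, f (b ^ n * t)) ≲[Ici 1] f := by
  obtain ⟨C, hC⟩ := hf
  have hb0 : 0 < b := one_pos.trans hb
  have hθ : ENNReal.ofReal (b ^ (-ε)) < 1 :=
    ENNReal.ofReal_lt_one.2 (Real.rpow_lt_one_of_one_lt_of_neg hb (neg_lt_zero.2 hε))
  have hsum : C * (1 - ENNReal.ofReal (b ^ (-ε)))⁻¹ ≠ ∞ :=
    ENNReal.mul_ne_top ENNReal.coe_ne_top (ENNReal.inv_ne_top.2 (tsub_pos_of_lt hθ).ne')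
  refine ⟨(C * (1 - ENNReal.ofReal (b ^ (-ε)))⁻¹).toNNReal, fun t ht => ?_⟩
  have ht0 : 0 < t := one_pos.trans_le ht
  rw [ENNReal.coe_toNNReal hsum]
  have hterm (n : ℕ) : f (b ^ n * t) ≤ C * ENNReal.ofReal (b ^ (-ε)) ^ n * f t := by
    have h := hC t (b ^ n * t) ht (le_mul_of_one_le_left ht0.le (one_le_pow₀ hb.le))
    rwa [mul_div_cancel_right₀ _ ht0.ne', ← Real.rpow_pow_comm hb0.le,
      ENNReal.ofReal_pow (by positivity)] at h
  calc ∑' n : ℕ, f (b ^ n * t) ≤ ∑' n : ℕ, C * ENNReal.ofReal (b ^ (-ε)) ^ n * f t :=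
        ENNReal.tsum_le_tsum hterm
    _ = C * (1 - ENNReal.ofReal (b ^ (-ε)))⁻¹ * f t := by
        rw [ENNReal.tsum_mul_right, ENNReal.tsum_mul_left, ENNReal.tsum_geometric]

lemma exists_rpow_neg_gt {b θ q : ℝ} (hb : 1 < b) (hθ : θ < 1) (hq : 0 < q) :
    ∃ ε : ℝ, 0 < ε ∧ ε < q ∧ θ < b ^ (-ε) := by
  have hcont : Continuous fun ε : ℝ => b ^ (-ε) :=
    continuous_const.rpow continuous_neg fun _ => Or.inl (by positivity)
  have hlim : ∀ᶠ ε in nhdsWithin (0 : ℝ) (Ioi 0), θ < b ^ (-ε) :=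
    (hcont.continuousAt.eventually_const_lt (by simpa using hθ)).filter_mono nhdsWithin_le_nhds
  obtain ⟨ε, hθε, hε⟩ := (hlim.and (Ioo_mem_nhdsGT hq)).exists
  exact ⟨ε, hε.1, hε.2, hθε⟩

lemma exists_growthLE_neg_of_antitoneOn (hf : AntitoneOn f (Ici 1)) {b : ℝ} (hb : 1 < b)
    {θ : ℝ≥0} (hθ : θ < 1) (hstep : ∀ t, 1 ≤ t → f (b * t) ≤ θ * f t) {q : ℝ} (hq : 0 < q) :
    ∃ ε, 0 < ε ∧ ε < q ∧ GrowthLE (-ε) f := by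
  have hb0 : 0 < b := one_pos.trans hb
  have hpow (n : ℕ) {t : ℝ} (ht : 1 ≤ t) : f (b ^ n * t) ≤ θ ^ n * f t := by
    induction n with
    | zero => simp
    | succ n ih =>
      rw [pow_succ', pow_succ', mul_assoc, mul_assoc]
      exact (hstep _ (one_le_mul_of_one_le_of_one_le (one_le_pow₀ hb.le) ht)).trans (by gcongr)
  obtain ⟨ε, hε0, hεq, hθε⟩ := exists_rpow_neg_gt hb (by exact_mod_cast hθ) hq
  refine ⟨ε, hε0, hεq, (b ^ ε).toNNReal, fun r R hr hR => ?_⟩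
  have hr0 : 0 < r := by linarith
  obtain ⟨n, hn, hn'⟩ := exists_nat_pow_near ((one_le_div hr0).2 hR) hb
  have hθn : (θ : ℝ) ^ n ≤ b ^ ε * (R / r) ^ (-ε) :=
    calc (θ : ℝ) ^ n ≤ (b ^ (-ε)) ^ n := pow_le_pow_left₀ θ.coe_nonneg hθε.le n
      _ = b ^ ε * (b ^ (n + 1)) ^ (-ε) := by
        rw [← Real.rpow_pow_comm hb0.le (-ε) (n + 1), pow_succ', ← mul_assoc,
          ← Real.rpow_add hb0, add_neg_cancel, Real.rpow_zero, one_mul]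
      _ ≤ b ^ ε * (R / r) ^ (-ε) := by
        gcongr ?_ * ?_
        exact Real.rpow_le_rpow_of_nonpos (div_pos (by linarith) hr0) hn'.le (by linarith)
  calc f R ≤ f (b ^ n * r) :=
        hf (one_le_mul_of_one_le_of_one_le (one_le_pow₀ hb.le) hr) (hr.trans hR)
          ((le_div_iff₀ hr0).1 hn)
    _ ≤ θ ^ n * f r := hpow n hr
    _ ≤ ENNReal.ofReal (b ^ ε) * ENNReal.ofReal ((R / r) ^ (-ε)) * f r := by
        rw [← ENNReal.ofReal_mul (by positivity), ← ENNReal.ofReal_coe_nnreal,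
          ← ENNReal.ofReal_pow θ.coe_nonneg]
        gcongr

lemma exists_lt_one_forall_le_mul_of_le_mul (C : ℝ≥0) :
    ∃ θ : ℝ≥0, θ < 1 ∧ ∀ v w : ℝ≥0∞, v + w ≤ C * v → w ≤ θ * (v + w) := by
  refine ⟨C / (C + 1), by rw [div_lt_one (by positivity)]; exact lt_add_one C, fun v w h => ?_⟩
  rw [ENNReal.coe_div (by positivity), ← ENNReal.mul_div_right_comm,
    ENNReal.le_div_iff_mul_le (.inl (by simp)) (.inl (by simp))]
  push_cast
  calc w * (C + 1) = C * w + w := by ring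
    _ ≤ C * w + C * v := by gcongr; exact le_add_self.trans h
    _ = C * (v + w) := by ring

end Growth

section SphericalizedDistance

variable [MetricSpace X] {a : X}

lemma sphDist_nonneg (a : X) (u v : Option X) : 0 ≤ sphDist a u v := by
  rcases u with _ | u <;> rcases v with _ | v <;> simp only [sphDist] <;> positivity

lemma sphDist_self (a : X) (u : Option X) : sphDist a u u = 0 := by
  cases u <;> simp [sphDist]

lemma sphDist_comm (a : X) (u v : Option X) : sphDist a u v = sphDist a v u := by
  cases u <;> cases v <;> simp only [sphDist, dist_comm, mul_comm]

lemma sphDhat_nonneg (a : X) (u : Option X) : 0 ≤ sphDhat a u := by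
  cases u <;> simp only [sphDhat, sphD] <;> positivity

lemma sphDist_none_left (a : X) (u : Option X) : sphDist a none u = sphDhat a u := by
  cases u <;> rfl

lemma sphDist_le_add_sphDhat (a : X) (u v : Option X) :
    sphDist a u v ≤ sphDhat a u + sphDhat a v := by
  rcases u with _ | u
  · simp [sphDist_none_left, sphDhat]
  rcases v with _ | v
  · simp [sphDist_comm a _ none, sphDist_none_left, sphDhat]
  have hdist : dist u v ≤ (1 + dist v a) + (1 + dist u a) := by
    linarith [dist_triangle_right u v a]
  simp only [sphDist, sphDhat, sphD]
  rw [div_add_div _ _ (by positivity) (by positivity), one_mul, mul_one]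
  gcongr

lemma sphDhat_le_add_sphDist (a : X) (u v : Option X) :
    sphDhat a v ≤ sphDhat a u + sphDist a u v := by
  rcases u with _ | u
  · simp [sphDist_none_left, sphDhat]
  rcases v with _ | v
  · exact add_nonneg (sphDhat_nonneg a _) (sphDist_nonneg a _ _)
  simp only [sphDist, sphDhat, sphD]
  rw [← sub_le_iff_le_add', div_sub_div _ _ (by positivity) (by positivity),
    mul_comm (1 + dist v a) (1 + dist u a)]
  gcongr
  linarith [dist_triangle u v a]

lemma mul_dist_le_add_of_le_two_mul {x u v : X} (hxu : 1 + dist u a ≤ 2 * (1 + dist x a)) :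
    (1 + dist u a) * dist x v ≤
      (1 + dist v a) * dist x u + 5 * ((1 + dist x a) * dist u v) := by
  have huv : 1 + dist u a ≤ (1 + dist v a) + dist u v := by linarith [dist_triangle u v a]
  have hxu3 : dist x u ≤ 3 * (1 + dist x a) := by linarith [dist_triangle_right x u a]
  calc (1 + dist u a) * dist x v
      ≤ (1 + dist u a) * (dist x u + dist u v) := by gcongr; exact dist_triangle x u v
    _ = (1 + dist u a) * dist x u + (1 + dist u a) * dist u v := mul_add _ _ _
    _ ≤ ((1 + dist v a) + dist u v) * dist x u + 2 * (1 + dist x a) * dist u v := by gcongr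
    _ = (1 + dist v a) * dist x u + dist u v * dist x u + 2 * (1 + dist x a) * dist u v := by ring
    _ ≤ (1 + dist v a) * dist x u + dist u v * (3 * (1 + dist x a)) +
          2 * (1 + dist x a) * dist u v := by gcongr
    _ = (1 + dist v a) * dist x u + 5 * ((1 + dist x a) * dist u v) := by ring

-- If `u` could approach `∞`, the first term on the right would also need a constant above `1`.
lemma sphDist_le_add_mul_sphDist {x u : Option X} (hxu : sphDhat a x ≤ 2 * sphDhat a u)
    (v : Option X) : sphDist a x v ≤ sphDist a x u + 5 * sphDist a u v := by
  have huv := sphDist_nonneg a u v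
  rcases x with _ | x
  · rw [sphDist_none_left, sphDist_none_left]
    linarith [sphDhat_le_add_sphDist a u v]
  rcases v with _ | v
  · have hux := sphDhat_le_add_sphDist a u (some x)
    rw [sphDist_comm a _ none, sphDist_comm a _ none, sphDist_none_left, sphDist_none_left,
      sphDist_comm a _ u]
    linarith [sphDhat_nonneg a u]
  rcases u with _ | u
  · have : 0 < sphDhat a (some x) := by simp only [sphDhat, sphD]; positivity
    simp only [sphDhat] at hxu this
    linarith
  have hxu2 : 1 + dist u a ≤ 2 * (1 + dist x a) := by
    simp only [sphDhat, sphD] at hxu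
    rwa [mul_one_div, div_le_div_iff₀ (by positivity) (by positivity), one_mul] at hxu
  simp only [sphDist]
  calc dist x v / ((1 + dist x a) * (1 + dist v a))
      = (1 + dist u a) * dist x v / ((1 + dist x a) * (1 + dist u a) * (1 + dist v a)) := by
        field_simp
    _ ≤ ((1 + dist v a) * dist x u + 5 * ((1 + dist x a) * dist u v)) /
          ((1 + dist x a) * (1 + dist u a) * (1 + dist v a)) := by
        gcongr
        exact mul_dist_le_add_of_le_two_mul hxu2
    _ = _ := by field_simp

lemma min_sphDist_le_add_mul_sphDist (a : X) (x u v : Option X) :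
    min (sphDist a x v) (sphDhat a x / 2) ≤
      min (sphDist a x u) (sphDhat a x / 2) + 5 * sphDist a u v := by
  have huv := sphDist_nonneg a u v
  rcases le_or_gt (sphDhat a x) (2 * sphDhat a u) with hxu | hux
  · rw [← min_add_add_right]
    exact min_le_min (sphDist_le_add_mul_sphDist hxu v) (by linarith)
  · have hfar : sphDhat a x / 2 ≤ sphDist a x u := by
      have := sphDhat_le_add_sphDist a u x
      rw [sphDist_comm] at this
      linarith
    rw [min_eq_right hfar]
    exact (min_le_right _ _).trans (by linarith)

lemma chainSum_nonneg (a : X) (L : List (Option X)) : 0 ≤ chainSum a L := by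
  induction L with
  | nil => rfl
  | cons x L ih =>
    cases L with
    | nil => rfl
    | cons y L => exact add_nonneg (sphDist_nonneg a x y) ih

lemma sphHatDist_le_sphDist (a : X) (x y : Option X) : sphHatDist a x y ≤ sphDist a x y := by
  refine csInf_le ⟨0, ?_⟩ ⟨[x, y], by simp [chainSum]⟩
  rintro _ ⟨L, -, -, rfl⟩
  exact chainSum_nonneg a L

section Lipschitz

variable {ρ : Option X → ℝ} {K : ℝ}

lemma le_add_mul_chainSum (hρ : ∀ u v, ρ v ≤ ρ u + K * sphDist a u v) (L : List (Option X))
    {x y : Option X} (hx : L.head? = some x) (hy : L.getLast? = some y) :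
    ρ y ≤ ρ x + K * chainSum a L := by
  induction L generalizing x with
  | nil => simp at hx
  | cons z L ih =>
    obtain rfl : z = x := by simpa using hx
    cases L with
    | nil =>
      obtain rfl : z = y := by simpa using hy
      simp [chainSum]
    | cons w L =>
      have hwy := ih (x := w) (by simp) (by simpa using hy)
      have hzw := hρ z w
      simp only [chainSum, mul_add]
      linarith

lemma le_add_mul_sphHatDist (hK : 0 < K) (hρ : ∀ u v, ρ v ≤ ρ u + K * sphDist a u v)
    (x y : Option X) : ρ y ≤ ρ x + K * sphHatDist a x y := by
  rw [← sub_le_iff_le_add', ← div_le_iff₀' hK]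
  refine le_csInf ⟨_, [x, y], by simp, by simp, rfl⟩ ?_
  rintro _ ⟨L, hx, hy, rfl⟩
  rw [div_le_iff₀' hK, sub_le_iff_le_add']
  exact le_add_mul_chainSum hρ L hx hy

end Lipschitz

-- Unlike `d_a(x, ·)` itself, its truncation at half the distance from `x` to `∞` is Lipschitz for
-- `d_a`, hence along chains.
lemma sphDist_le_mul_sphHatDist (a : X) (x y : Option X) :
    sphDist a x y ≤ 21 * sphHatDist a x y := by
  have hmin := le_add_mul_sphHatDist (by norm_num) (min_sphDist_le_add_mul_sphDist a x) x y
  rw [sphDist_self, min_eq_left (div_nonneg (sphDhat_nonneg a x) zero_le_two), zero_add] at hmin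
  have hhat := le_add_mul_sphHatDist (a := a) one_pos
    (by simpa only [one_mul] using sphDhat_le_add_sphDist a) x y
  have hadd := sphDist_le_add_sphDhat a x y
  have hnonneg := sphDist_nonneg a x y
  rcases min_cases (sphDist a x y) (sphDhat a x / 2) with ⟨h, -⟩ | ⟨h, -⟩ <;>
    rw [h] at hmin <;> linarith

lemma bounds_of_sphDist_lt {x y : X} {r : ℝ} (hr : r * (1 + dist x a) ≤ 1 / 2)
    (hxy : sphDist a (some x) (some y) < r) :
    1 + dist y a ≤ 2 * (1 + dist x a) ∧ 1 + dist x a ≤ 2 * (1 + dist y a) ∧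
      dist x y < 2 * r * (1 + dist x a) ^ 2 := by
  have hr0 : 0 < r := (sphDist_nonneg a _ _).trans_lt hxy
  simp only [sphDist] at hxy
  rw [div_lt_iff₀ (by positivity), ← mul_assoc] at hxy
  have hdist : dist x y < (1 + dist y a) / 2 :=
    calc dist x y < r * (1 + dist x a) * (1 + dist y a) := hxy
      _ ≤ 1 / 2 * (1 + dist y a) := by gcongr
      _ = (1 + dist y a) / 2 := by ring
  have hy : 1 + dist y a ≤ 2 * (1 + dist x a) := by linarith [dist_triangle_left y a x]
  refine ⟨hy, by linarith [dist_triangle x y a], ?_⟩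
  calc dist x y < r * (1 + dist x a) * (1 + dist y a) := hxy
    _ ≤ r * (1 + dist x a) * (2 * (1 + dist x a)) := by gcongr
    _ = 2 * r * (1 + dist x a) ^ 2 := by ring

lemma sphDist_le_of_dist_le {x y : X} (hxy : dist x y ≤ (1 + dist x a) / 2) :
    sphDist a (some x) (some y) ≤ 2 * dist x y / (1 + dist x a) ^ 2 := by
  have hx : 1 + dist x a ≤ 2 * (1 + dist y a) := by linarith [dist_triangle x y a]
  simp only [sphDist]
  rw [div_le_div_iff₀ (by positivity) (by positivity)]
  calc dist x y * (1 + dist x a) ^ 2 = dist x y * (1 + dist x a) * (1 + dist x a) := by ring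
    _ ≤ dist x y * (1 + dist x a) * (2 * (1 + dist y a)) := by gcongr
    _ = 2 * dist x y * ((1 + dist x a) * (1 + dist y a)) := by ring

end SphericalizedDistance

section SphericalizedMeasure

variable [MetricSpace X] {a : X} {q κ : ℝ}

/-- The set of points with `1 + |x| ≥ t`, a neighbourhood of `∞` in `X̂`; the measure of such tails
is what has to be controlled. -/
def sphTail (a : X) (t : ℝ) : Set X := {x | t ≤ 1 + dist x a}

/-- The trace on `X` of the ball about `x : X̂` of radius `r` for the quasimetric `d_a`. -/
def sphQuasiball (a : X) (x : Option X) (r : ℝ) : Set X := {y | sphDist a x (some y) < r}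

/-- Uniform perfectness of `X` at the point `a` for radii `≥ 1`, with constant `κ`. -/
def UniformlyPerfectAt (a : X) (κ : ℝ) : Prop :=
  1 < κ ∧ ∀ r : ℝ, 1 ≤ r → (ball a (κ * r) \ ball a r).Nonempty

lemma UniformlyPerfectAt.exists_forall_dist (ha : UniformlyPerfectAt a κ) :
    ∃ z : ℝ → X, ∀ r, 1 ≤ r → r ≤ dist (z r) a ∧ dist (z r) a < κ * r := by
  have hannulus (r : ℝ) (hr : 1 ≤ r) : ∃ z, r ≤ dist z a ∧ dist z a < κ * r :=
    (ha.2 r hr).imp fun _ hz => ⟨not_lt.1 hz.2, hz.1⟩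
  have : Nonempty X := ⟨a⟩
  choose! z hz using hannulus
  exact ⟨z, hz⟩

lemma mem_sphTail {x : X} {t : ℝ} : x ∈ sphTail a t ↔ t ≤ 1 + dist x a := Iff.rfl

lemma mem_sphQuasiball {x : Option X} {y : X} {r : ℝ} :
    y ∈ sphQuasiball a x r ↔ sphDist a x (some y) < r := Iff.rfl

lemma sphTail_antitone (a : X) : Antitone (sphTail a) :=
  fun _ _ hst _ hx => hst.trans hx

lemma sphTail_max_one (a : X) (t : ℝ) : sphTail a (max 1 t) = sphTail a t := by
  ext x
  simp [sphTail, dist_nonneg]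

lemma sphTail_sdiff_subset_ball (a : X) (s t : ℝ) : sphTail a s \ sphTail a t ⊆ ball a t := by
  rintro y ⟨-, hy⟩
  rw [mem_ball]
  linarith [not_le.1 (mem_sphTail.not.1 hy)]

lemma sphTail_subset_iUnion_sdiff {b t : ℝ} (hb : 1 < b) (ht : 0 < t) :
    sphTail a t ⊆ ⋃ n : ℕ, sphTail a (b ^ n * t) \ sphTail a (b * (b ^ n * t)) := by
  intro y hy
  obtain ⟨n, hn, hn'⟩ := exists_nat_pow_near ((one_le_div ht).2 hy) hb
  rw [le_div_iff₀ ht] at hn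
  rw [div_lt_iff₀ ht, pow_succ', mul_assoc] at hn'
  exact mem_iUnion.2 ⟨n, hn, not_le.2 hn'⟩

lemma sphQuasiball_mono (a : X) (x : Option X) : Monotone (sphQuasiball a x) :=
  fun _ _ hrs _ hy => lt_of_lt_of_le hy hrs

lemma sphQuasiball_subset_sphTail {x : Option X} {r t : ℝ}
    (hxr : sphDhat a x + r ≤ 1 / t) : sphQuasiball a x r ⊆ sphTail a t := by
  intro y hy
  have hy' : sphDhat a (some y) < 1 / t :=
    (sphDhat_le_add_sphDist a x (some y)).trans_lt (by linarith [mem_sphQuasiball.1 hy])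
  exact (lt_of_one_div_lt_one_div (by positivity) hy').le

lemma sphTail_subset_sphQuasiball {x : Option X} {r t : ℝ} (ht : 0 < t)
    (hxr : sphDhat a x + 1 / t < r) : sphTail a t ⊆ sphQuasiball a x r := by
  intro y hy
  have hy' : sphDhat a (some y) ≤ 1 / t := one_div_le_one_div_of_le ht hy
  exact (sphDist_le_add_sphDhat a x (some y)).trans_lt (by linarith)

lemma ball_subset_sphQuasiball {x : X} {r ρ : ℝ} (hρ : ρ ≤ (1 + dist x a) / 2)
    (hr : 2 * ρ ≤ r * (1 + dist x a) ^ 2) : ball x ρ ⊆ sphQuasiball a (some x) r := by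
  intro y hy
  rw [mem_ball'] at hy
  refine (sphDist_le_of_dist_le (hy.le.trans hρ)).trans_lt ?_
  rw [div_lt_iff₀ (by positivity)]
  linarith

variable [MeasurableSpace X] {μ : Measure X}

/-- The restriction to `X` of the sphericalized measure `μ̂_q`. -/
def sphMeasure (a : X) (q : ℝ) (μ : Measure X) : Measure X :=
  μ.withDensity fun x => ENNReal.ofReal ((1 + dist x a) ^ (-q))

/-- The quantity `t ^ (-q) * μ(B(a, t))`, which models the `μ̂_q`-measure of the set where `1 + |x|`
is comparable to `t`. -/
def sphModel (a : X) (q : ℝ) (μ : Measure X) (t : ℝ) : ℝ≥0∞ :=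
  ENNReal.ofReal (t ^ (-q)) * μ (ball a t)

lemma exists_growthLE_sphModel_iff :
    (∃ ε, 0 < ε ∧ ε < q ∧ GrowthLE (-ε) (sphModel a q μ)) ↔
      ∃ s, 0 < s ∧ s < q ∧ GrowthLE s fun t => μ (ball a t) := by
  have hexp (s : ℝ) : GrowthLE (-q + s) (sphModel a q μ) ↔ GrowthLE s fun t => μ (ball a t) :=
    growthLE_ofReal_rpow_mul_iff
  constructor
  · rintro ⟨ε, hε, hεq, h⟩
    exact ⟨q - ε, by linarith, by linarith, (hexp _).1 (by convert h using 1; ring)⟩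
  · rintro ⟨s, hs, hsq, h⟩
    exact ⟨q - s, by linarith, by linarith, by convert (hexp s).2 h using 1; ring⟩

lemma sphMeas_eq_sphMeasure [SFinite μ] (a : X) (q : ℝ) (S : Set (Option X)) :
    sphMeas a q μ S = sphMeasure a q μ (some ⁻¹' S) := by
  rw [sphMeas, sphMeasure, withDensity_apply']
  refine lintegral_congr fun x => ?_
  rw [Real.rpow_neg (by positivity)]

lemma sigmaFinite_of_measure_ball_lt_top (a : X)
    (hμ : ∀ r, 0 < r → μ (ball a r) < ∞) : SigmaFinite μ := by
  refine ⟨⟨⟨fun n : ℕ => ball a (n + 1), fun _ => mem_univ _, fun n => hμ _ (by positivity), ?_⟩⟩⟩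
  refine eq_univ_of_forall fun x => mem_iUnion.2 ?_
  obtain ⟨n, hn⟩ := exists_nat_gt (dist x a)
  exact ⟨n, hn.trans (lt_add_one _)⟩

lemma isDoubling_sphMeas_iff [SFinite μ] :
    IsDoubling (fun (x : Option X) r => sphMeas a q μ {y | sphHatDist a x y < r}) ↔
      IsDoubling fun x r => sphMeasure a q μ (sphQuasiball a x r) := by
  simp only [sphMeas_eq_sphMeasure]
  have hhat (x : Option X) (r : ℝ) :
      some ⁻¹' {y | sphHatDist a x y < r} ⊆ sphQuasiball a x (21 * r) := fun y hy =>
    (sphDist_le_mul_sphHatDist a x (some y)).trans_lt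
      (mul_lt_mul_of_pos_left (show sphHatDist a x (some y) < r from hy) (by norm_num))
  have hquasi (x : Option X) (r : ℝ) :
      sphQuasiball a x r ⊆ some ⁻¹' {y | sphHatDist a x y < 21 * r} := fun y hy =>
    (sphHatDist_le_sphDist a x (some y)).trans_lt <| by
      linarith [mem_sphQuasiball.1 hy, sphDist_nonneg a x (some y)]
  constructor <;> intro h
  · exact h.of_le_dilate (fun x r s hrs => measure_mono fun y hy => lt_of_lt_of_le hy hrs)
      (by norm_num : (0 : ℝ) < 21) (fun x r => measure_mono (hquasi x r))
      fun x r => measure_mono (hhat x r)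
  · exact h.of_le_dilate (fun x r s hrs => measure_mono (sphQuasiball_mono a x hrs))
      (by norm_num : (0 : ℝ) < 21) (fun x r => measure_mono (hhat x r))
      fun x r => measure_mono (hquasi x r)

lemma measure_ball_dominated {ι : Type*} {s : Set ι} {x y : ι → X} {r r' : ι → ℝ}
    (hμ : IsDoubling fun (x : X) r => μ (ball x r)) (K : ℝ) (hr' : ∀ i ∈ s, 0 < r' i)
    (hr : ∀ i ∈ s, r i + dist (x i) (y i) ≤ K * r' i) :
    (fun i => μ (ball (x i) (r i))) ≲[s] fun i => μ (ball (y i) (r' i)) :=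
  calc (fun i => μ (ball (x i) (r i)))
      ≲[s] fun i => μ (ball (y i) (r i + dist (x i) (y i))) :=
        .of_le fun _ _ => measure_mono (ball_subset_ball' le_rfl)
    _ ≲[s] fun i => μ (ball (y i) (r' i)) :=
        hμ.dominated (fun _ _ _ h => measure_mono (ball_subset_ball h)) K hr' hr

variable [OpensMeasurableSpace X]

lemma measurableSet_sphTail (a : X) (t : ℝ) : MeasurableSet (sphTail a t) :=
  (isClosed_le continuous_const (by fun_prop)).measurableSet

lemma sphMeasure_le {S A : Set X} {t : ℝ} (hq : 0 ≤ q) (ht : 0 < t) (hA : MeasurableSet A)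
    (hSA : S ⊆ A) (hSt : S ⊆ sphTail a t) :
    sphMeasure a q μ S ≤ ENNReal.ofReal (t ^ (-q)) * μ A := by
  have hmeas : MeasurableSet (A ∩ sphTail a t) := hA.inter (measurableSet_sphTail a t)
  calc sphMeasure a q μ S ≤ sphMeasure a q μ (A ∩ sphTail a t) :=
        measure_mono (subset_inter hSA hSt)
    _ = ∫⁻ x in A ∩ sphTail a t, ENNReal.ofReal ((1 + dist x a) ^ (-q)) ∂μ :=
        withDensity_apply _ hmeas
    _ ≤ ∫⁻ _ in A ∩ sphTail a t, ENNReal.ofReal (t ^ (-q)) ∂μ :=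
        setLIntegral_mono measurable_const fun x hx => ENNReal.ofReal_le_ofReal <|
          Real.rpow_le_rpow_of_nonpos ht hx.2 (neg_nonpos.2 hq)
    _ ≤ ENNReal.ofReal (t ^ (-q)) * μ A := by
        rw [setLIntegral_const]
        gcongr
        exact inter_subset_left

lemma le_sphMeasure {S A : Set X} {t : ℝ} (hq : 0 ≤ q) (hAS : A ⊆ S)
    (hAt : ∀ y ∈ A, 1 + dist y a ≤ t) :
    ENNReal.ofReal (t ^ (-q)) * μ A ≤ sphMeasure a q μ S := by
  have hdist : Measurable fun x => dist x a := (by fun_prop : Continuous _).measurable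
  calc ENNReal.ofReal (t ^ (-q)) * μ A = ∫⁻ _ in A, ENNReal.ofReal (t ^ (-q)) ∂μ :=
        (setLIntegral_const _ _).symm
    _ ≤ ∫⁻ x in A, ENNReal.ofReal ((1 + dist x a) ^ (-q)) ∂μ :=
        setLIntegral_mono ((hdist.const_add 1).pow_const (-q)).ennreal_ofReal fun y hy =>
          ENNReal.ofReal_le_ofReal <|
            Real.rpow_le_rpow_of_nonpos (by positivity) (hAt y hy) (neg_nonpos.2 hq)
    _ ≤ sphMeasure a q μ A := withDensity_apply_le _ _
    _ ≤ sphMeasure a q μ S := measure_mono hAS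

lemma le_sphMeasure_sphQuasiball (hq : 0 ≤ q) {x : X} {r ρ : ℝ} (hρ : ρ ≤ (1 + dist x a) / 2)
    (hr : 2 * ρ ≤ r * (1 + dist x a) ^ 2) :
    ENNReal.ofReal ((2 * (1 + dist x a)) ^ (-q)) * μ (ball x ρ) ≤
      sphMeasure a q μ (sphQuasiball a (some x) r) := by
  refine le_sphMeasure hq (ball_subset_sphQuasiball hρ hr) fun y hy => ?_
  rw [mem_ball] at hy
  linarith [dist_triangle y x a, dist_nonneg (x := x) (y := a)]

lemma sphMeasure_sphQuasiball_le (hq : 0 ≤ q) {x : X} {r : ℝ} (hr : r * (1 + dist x a) ≤ 1 / 2) :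
    sphMeasure a q μ (sphQuasiball a (some x) r) ≤
      ENNReal.ofReal (((1 + dist x a) / 2) ^ (-q)) * μ (ball x (2 * r * (1 + dist x a) ^ 2)) := by
  have hbounds {y} (hy : y ∈ sphQuasiball a (some x) r) := bounds_of_sphDist_lt hr hy
  refine sphMeasure_le hq (by positivity) measurableSet_ball
    (fun y hy => mem_ball'.2 (hbounds hy).2.2) fun y hy => ?_
  rw [mem_sphTail]
  linarith [(hbounds hy).2.1]

section Annuli

variable (hμ : IsDoubling fun (x : X) r => μ (ball x r)) (hq : 0 ≤ q)
include hμ hq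

lemma sphMeasure_sphTail_sdiff_dominated (b : ℝ) :
    (fun t => sphMeasure a q μ (sphTail a t \ sphTail a (b * t))) ≲[Ici 1] sphModel a q μ :=
  calc (fun t => sphMeasure a q μ (sphTail a t \ sphTail a (b * t)))
      ≲[Ici 1] fun t => ENNReal.ofReal (t ^ (-q)) * μ (ball a (b * t)) :=
        .of_le fun t ht => sphMeasure_le hq (one_pos.trans_le ht) measurableSet_ball
          (sphTail_sdiff_subset_ball a t (b * t)) sdiff_subset
    _ ≲[Ici 1] sphModel a q μ :=
        .mul (.of_le fun _ _ => le_rfl) <| measure_ball_dominated hμ b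
          (fun t ht => one_pos.trans_le ht) fun t _ => by rw [dist_self, add_zero]

lemma sphModel_dominated_sphMeasure_sphTail_sdiff (ha : UniformlyPerfectAt a κ) :
    sphModel a q μ ≲[Ici 1]
      fun t => sphMeasure a q μ (sphTail a t \ sphTail a ((2 * κ + 2) * t)) := by
  have hκ := ha.1
  obtain ⟨z, hz⟩ := ha.exists_forall_dist
  have hz2 {t : ℝ} (ht : 1 ≤ t) : 2 * t ≤ dist (z (2 * t)) a ∧ dist (z (2 * t)) a < 2 * κ * t :=
    (hz (2 * t) (by linarith)).imp id fun h => by linarith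
  have hball {t y} (ht : 1 ≤ t) (hy : y ∈ ball (z (2 * t)) t) :
      t ≤ 1 + dist y a ∧ 1 + dist y a < (2 * κ + 2) * t := by
    rw [mem_ball] at hy
    have := hz2 ht
    constructor
    · linarith [dist_triangle_left (z (2 * t)) a y]
    · linarith [dist_triangle y (z (2 * t)) a]
  calc sphModel a q μ
      ≲[Ici 1] fun t => ENNReal.ofReal (((2 * κ + 2) * t) ^ (-q)) * μ (ball (z (2 * t)) t) := by
        refine .mul (.ofReal_rpow_neg (c := 2 * κ + 2) (by linarith) hq (fun t ht => ?_)
          fun t _ => le_rfl) (measure_ball_dominated hμ (2 * κ + 1)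
            (fun t ht => one_pos.trans_le ht) fun t ht => ?_)
        · have : 0 < t := one_pos.trans_le ht
          positivity
        · rw [dist_comm]
          linarith [hz2 ht]
    _ ≲[Ici 1] fun t => sphMeasure a q μ (sphTail a t \ sphTail a ((2 * κ + 2) * t)) :=
        .of_le fun t ht => le_sphMeasure hq
          (fun y hy => ⟨(hball ht hy).1, not_le.2 (hball ht hy).2⟩) fun y hy => (hball ht hy).2.le

lemma sphModel_dominated_sphMeasure_sphTail (ha : UniformlyPerfectAt a κ) :
    sphModel a q μ ≲[Ici 1] fun t => sphMeasure a q μ (sphTail a t) :=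
  (sphModel_dominated_sphMeasure_sphTail_sdiff hμ hq ha).trans <|
    .of_le fun _ _ => measure_mono sdiff_subset

lemma sphMeasure_sphTail_dominated_mul (ha : UniformlyPerfectAt a κ) {K : ℝ} (hK : 1 ≤ K) :
    (fun t => sphMeasure a q μ (sphTail a t)) ≲[Ici 1]
      fun t => sphMeasure a q μ (sphTail a (K * t)) := by
  have hmodel : sphModel a q μ ≲[Ici 1] fun t => sphMeasure a q μ (sphTail a (K * t)) :=
    calc sphModel a q μ ≲[Ici 1] fun t => sphModel a q μ (K * t) :=
          .mul (.ofReal_rpow_neg (one_pos.trans_le hK) hq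
            (fun t ht => mul_pos (one_pos.trans_le hK) (one_pos.trans_le ht)) fun t _ => le_rfl)
            (.of_le fun t ht => measure_mono <| ball_subset_ball <|
              le_mul_of_one_le_left (one_pos.trans_le ht).le hK)
      _ ≲[Ici 1] fun t => sphMeasure a q μ (sphTail a (K * t)) :=
          (sphModel_dominated_sphMeasure_sphTail hμ hq ha).comp fun t ht =>
            one_le_mul_of_one_le_of_one_le hK ht
  calc (fun t => sphMeasure a q μ (sphTail a t))
      ≲[Ici 1] fun t => sphMeasure a q μ (sphTail a t \ sphTail a (K * t)) +
          sphMeasure a q μ (sphTail a (K * t)) :=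
        .of_le fun t _ => (measure_mono (sdiff_union_self.symm ▸ subset_union_left)).trans
          (measure_union_le _ _)
    _ ≲[Ici 1] fun t => sphMeasure a q μ (sphTail a (K * t)) :=
        ((sphMeasure_sphTail_sdiff_dominated hμ hq K).trans hmodel).add (.of_le fun _ _ => le_rfl)

lemma sphMeasure_sphTail_dominated {ι : Type*} {s : Set ι} {u v : ι → ℝ}
    (ha : UniformlyPerfectAt a κ) (K : ℝ) (hu : ∀ i ∈ s, 0 ≤ u i)
    (hvu : ∀ i ∈ s, v i ≤ K * u i) :
    (fun i => sphMeasure a q μ (sphTail a (u i))) ≲[s]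
      fun i => sphMeasure a q μ (sphTail a (v i)) :=
  calc (fun i => sphMeasure a q μ (sphTail a (u i)))
      ≲[s] fun i => sphMeasure a q μ (sphTail a (max 1 (u i))) :=
        .of_le fun i _ => by rw [sphTail_max_one]
    _ ≲[s] fun i => sphMeasure a q μ (sphTail a (max 1 K * max 1 (u i))) :=
        (sphMeasure_sphTail_dominated_mul hμ hq ha (le_max_left 1 K)).comp
          fun i _ => le_max_left 1 (u i)
    _ ≲[s] fun i => sphMeasure a q μ (sphTail a (v i)) :=
        .of_le fun i hi => measure_mono <| sphTail_antitone a <| (hvu i hi).trans <|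
          mul_le_mul (le_max_right _ _) (le_max_right _ _) (hu i hi) (by positivity)

end Annuli

section DoublingOfTails

variable (hμ : IsDoubling fun (x : X) r => μ (ball x r)) (ha : UniformlyPerfectAt a κ)
  (hq : 0 ≤ q)
include hμ hq

lemma sphMeasure_sphQuasiball_dominated_of_small :
    (fun p : X × ℝ => sphMeasure a q μ (sphQuasiball a (some p.1) (2 * p.2)))
      ≲[{p | 0 < p.2 ∧ 4 * p.2 * (1 + dist p.1 a) ≤ 1}]
      fun p => sphMeasure a q μ (sphQuasiball a (some p.1) p.2) := by
  set s : Set (X × ℝ) := {p | 0 < p.2 ∧ 4 * p.2 * (1 + dist p.1 a) ≤ 1}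
  calc (fun p : X × ℝ => sphMeasure a q μ (sphQuasiball a (some p.1) (2 * p.2)))
      ≲[s] fun p => ENNReal.ofReal (((1 + dist p.1 a) / 2) ^ (-q)) *
          μ (ball p.1 (2 * (2 * p.2) * (1 + dist p.1 a) ^ 2)) :=
        .of_le fun p hp => sphMeasure_sphQuasiball_le hq (by linarith [hp.2])
    _ ≲[s] fun p => ENNReal.ofReal ((2 * (1 + dist p.1 a)) ^ (-q)) *
          μ (ball p.1 (p.2 * (1 + dist p.1 a) ^ 2 / 2)) := by
        refine .mul (.ofReal_rpow_neg (c := 4) (by norm_num) hq (fun p _ => by positivity)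
          fun p _ => by linarith) (measure_ball_dominated hμ 8 (fun p hp => ?_) fun p _ => ?_)
        · have := hp.1
          positivity
        · rw [dist_self]
          linarith
    _ ≲[s] fun p => sphMeasure a q μ (sphQuasiball a (some p.1) p.2) := by
        refine .of_le fun p hp => le_sphMeasure_sphQuasiball hq ?_ (by linarith)
        calc p.2 * (1 + dist p.1 a) ^ 2 / 2
            = 4 * p.2 * (1 + dist p.1 a) * ((1 + dist p.1 a) / 8) := by ring
          _ ≤ 1 * ((1 + dist p.1 a) / 8) := by gcongr; exact hp.2
          _ ≤ (1 + dist p.1 a) / 2 := by linarith [dist_nonneg (x := p.1) (y := a)]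

include ha

lemma sphMeasure_sphQuasiball_dominated_of_large :
    (fun p : Option X × ℝ => sphMeasure a q μ (sphQuasiball a p.1 (2 * p.2)))
      ≲[{p | 0 < p.2 ∧ 4 * sphDhat a p.1 ≤ p.2}]
      fun p => sphMeasure a q μ (sphQuasiball a p.1 p.2) := by
  set s : Set (Option X × ℝ) := {p | 0 < p.2 ∧ 4 * sphDhat a p.1 ≤ p.2}
  calc (fun p : Option X × ℝ => sphMeasure a q μ (sphQuasiball a p.1 (2 * p.2)))
      ≲[s] fun p => sphMeasure a q μ (sphTail a (1 / (3 * p.2))) :=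
        .of_le fun p hp => measure_mono <| sphQuasiball_subset_sphTail <| by
          rw [one_div_one_div]
          linarith [hp.1, hp.2]
    _ ≲[s] fun p => sphMeasure a q μ (sphTail a (2 / p.2)) := by
        refine sphMeasure_sphTail_dominated hμ hq ha 6 (fun p hp => ?_) fun p hp => ?_
        · have := hp.1
          positivity
        · have := hp.1
          exact le_of_eq (by field_simp; norm_num)
    _ ≲[s] fun p => sphMeasure a q μ (sphQuasiball a p.1 p.2) := by
        refine .of_le fun p hp => measure_mono <|
          sphTail_subset_sphQuasiball (div_pos two_pos hp.1) ?_
        rw [one_div_div]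
        linarith [hp.1, hp.2]

lemma sphMeasure_sphQuasiball_dominated_of_medium
    (htail : (fun t => sphMeasure a q μ (sphTail a t)) ≲[Ici 1] sphModel a q μ) :
    (fun p : X × ℝ => sphMeasure a q μ (sphQuasiball a (some p.1) (2 * p.2)))
      ≲[{p | 1 ≤ 4 * p.2 * (1 + dist p.1 a) ∧ p.2 * (1 + dist p.1 a) ≤ 4}]
      fun p => sphMeasure a q μ (sphQuasiball a (some p.1) p.2) := by
  set s : Set (X × ℝ) :=
    {p | 1 ≤ 4 * p.2 * (1 + dist p.1 a) ∧ p.2 * (1 + dist p.1 a) ≤ 4}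
  calc (fun p : X × ℝ => sphMeasure a q μ (sphQuasiball a (some p.1) (2 * p.2)))
      ≲[s] fun p => sphMeasure a q μ (sphTail a ((1 + dist p.1 a) / 9)) := by
        refine .of_le fun p hp => measure_mono <| sphQuasiball_subset_sphTail ?_
        have hp2 : p.2 ≤ 4 / (1 + dist p.1 a) := (le_div_iff₀ (by positivity)).2 hp.2
        calc 1 / (1 + dist p.1 a) + 2 * p.2
            ≤ 1 / (1 + dist p.1 a) + 2 * (4 / (1 + dist p.1 a)) := by gcongr
          _ = 1 / ((1 + dist p.1 a) / 9) := by field_simp; norm_num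
    _ ≲[s] fun p => sphMeasure a q μ (sphTail a (1 + dist p.1 a)) :=
        sphMeasure_sphTail_dominated hμ hq ha 9 (fun p _ => by positivity) fun p _ => by linarith
    _ ≲[s] fun p => sphModel a q μ (1 + dist p.1 a) :=
        htail.comp fun p _ => le_add_of_nonneg_right dist_nonneg
    _ ≲[s] fun p => ENNReal.ofReal ((2 * (1 + dist p.1 a)) ^ (-q)) *
          μ (ball p.1 ((1 + dist p.1 a) / 8)) := by
        refine .mul (.ofReal_rpow_neg (c := 2) two_pos hq (fun p _ => by positivity)
          fun p _ => le_rfl) (measure_ball_dominated hμ 16 (fun p _ => by positivity) fun p _ => ?_)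
        rw [dist_comm]
        linarith
    _ ≲[s] fun p => sphMeasure a q μ (sphQuasiball a (some p.1) p.2) := by
        refine .of_le fun p hp => le_sphMeasure_sphQuasiball hq ?_ ?_
        · linarith [dist_nonneg (x := p.1) (y := a)]
        · calc 2 * ((1 + dist p.1 a) / 8) = 1 * ((1 + dist p.1 a) / 4) := by ring
            _ ≤ 4 * p.2 * (1 + dist p.1 a) * ((1 + dist p.1 a) / 4) := by gcongr; exact hp.1
            _ = p.2 * (1 + dist p.1 a) ^ 2 := by ring

lemma isDoubling_sphQuasiball_of_sphTail_dominated
    (htail : (fun t => sphMeasure a q μ (sphTail a t)) ≲[Ici 1] sphModel a q μ) :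
    IsDoubling fun x r => sphMeasure a q μ (sphQuasiball a x r) := by
  have hfinite := (sphMeasure_sphQuasiball_dominated_of_small hμ hq).union
    (sphMeasure_sphQuasiball_dominated_of_medium hμ ha hq htail)
  refine ((hfinite.image (φ := Prod.map some id)).union
    (sphMeasure_sphQuasiball_dominated_of_large hμ ha hq)).mono ?_
  rintro ⟨_ | x, r⟩ (hr : 0 < r)
  · exact .inr ⟨hr, by simpa [sphDhat] using hr.le⟩
  · rcases le_or_gt (r * (1 + dist x a)) 4 with h4 | h4
    · refine .inl ⟨(x, r), ?_, rfl⟩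
      rcases le_total (4 * r * (1 + dist x a)) 1 with h1 | h1
      exacts [.inl ⟨hr, h1⟩, .inr ⟨h1, h4⟩]
    · refine .inr ⟨hr, ?_⟩
      simp only [sphDhat, sphD]
      rw [mul_one_div, div_le_iff₀ (by positivity)]
      exact h4.le

lemma sphTail_dominated_of_isDoubling_sphQuasiball
    (hQ : IsDoubling fun x r => sphMeasure a q μ (sphQuasiball a x r)) :
    (fun t => sphMeasure a q μ (sphTail a t)) ≲[Ici 1] sphModel a q μ := by
  have hκ := ha.1
  obtain ⟨z, hz⟩ := ha.exists_forall_dist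
  have hzt (t : ℝ) (ht : 1 ≤ t) : 1 + dist (z t) a ≤ 2 * κ * t := by
    linarith [hz t ht, one_le_mul_of_one_le_of_one_le hκ.le ht]
  calc (fun t => sphMeasure a q μ (sphTail a t))
      ≲[Ici 1] fun t => sphMeasure a q μ (sphQuasiball a (some (z t)) (3 / t)) := by
        refine .of_le fun t ht => measure_mono ?_
        have ht0 : 0 < t := one_pos.trans_le ht
        refine sphTail_subset_sphQuasiball ht0 ?_
        have hzt : sphDhat a (some (z t)) ≤ 1 / t :=
          one_div_le_one_div_of_le ht0 (by linarith [hz t ht])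
        calc sphDhat a (some (z t)) + 1 / t ≤ 1 / t + 1 / t := by gcongr
          _ < 3 / t := by rw [← add_div]; gcongr; norm_num
    _ ≲[Ici 1] fun t => sphMeasure a q μ (sphQuasiball a (some (z t)) (1 / (4 * κ * t))) := by
        refine hQ.dominated (fun x _ _ h => measure_mono (sphQuasiball_mono a x h)) (12 * κ)
          (fun t ht => ?_) fun t ht => ?_ <;> have : 0 < t := one_pos.trans_le ht
        · positivity
        · exact le_of_eq (by field_simp; norm_num)
    _ ≲[Ici 1] fun t => ENNReal.ofReal (((1 + dist (z t) a) / 2) ^ (-q)) *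
          μ (ball (z t) (2 * (1 / (4 * κ * t)) * (1 + dist (z t) a) ^ 2)) := by
        refine .of_le fun t ht => sphMeasure_sphQuasiball_le hq ?_
        have : 0 < t := one_pos.trans_le ht
        rw [one_div_mul_eq_div, div_le_iff₀ (by positivity)]
        linarith [hzt t ht]
    _ ≲[Ici 1] sphModel a q μ := by
        refine .mul (.ofReal_rpow_neg (c := 2) two_pos hq (fun t ht => one_pos.trans_le ht)
          fun t ht => by linarith [hz t ht]) (measure_ball_dominated hμ (3 * κ)
            (fun t ht => one_pos.trans_le ht) fun t ht => ?_)
        have : 0 < t := one_pos.trans_le ht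
        calc 2 * (1 / (4 * κ * t)) * (1 + dist (z t) a) ^ 2 + dist (z t) a
            ≤ 2 * (1 / (4 * κ * t)) * (2 * κ * t) ^ 2 + κ * t := by
              gcongr
              exacts [hzt t ht, (hz t ht).2.le]
          _ = 3 * κ * t := by field_simp; norm_num

lemma isDoubling_sphQuasiball_iff :
    IsDoubling (fun x r => sphMeasure a q μ (sphQuasiball a x r)) ↔
      (fun t => sphMeasure a q μ (sphTail a t)) ≲[Ici 1] sphModel a q μ :=
  ⟨sphTail_dominated_of_isDoubling_sphQuasiball hμ ha hq,
    isDoubling_sphQuasiball_of_sphTail_dominated hμ ha hq⟩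

end DoublingOfTails

section GrowthOfTails

variable (hμ : IsDoubling fun (x : X) r => μ (ball x r)) (ha : UniformlyPerfectAt a κ)
  (hq : 0 < q)
include hμ hq

lemma sphTail_dominated_of_growthLE {ε : ℝ} (hε : 0 < ε)
    (hgrowth : GrowthLE (-ε) (sphModel a q μ)) :
    (fun t => sphMeasure a q μ (sphTail a t)) ≲[Ici 1] sphModel a q μ :=
  calc (fun t => sphMeasure a q μ (sphTail a t))
      ≲[Ici 1] fun t => ∑' n : ℕ,
          sphMeasure a q μ (sphTail a (2 ^ n * t) \ sphTail a (2 * (2 ^ n * t))) :=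
        .of_le fun _ ht => (measure_mono (sphTail_subset_iUnion_sdiff one_lt_two
          (one_pos.trans_le ht))).trans (measure_iUnion_le _)
    _ ≲[Ici 1] fun t => ∑' n : ℕ, sphModel a q μ (2 ^ n * t) :=
        (sphMeasure_sphTail_sdiff_dominated hμ hq.le 2).tsum_pow_mul one_le_two
    _ ≲[Ici 1] sphModel a q μ := hgrowth.tsum_dominated hε one_lt_two

include ha

-- Each annulus carries a fixed proportion of its tail, so the tails decay geometrically.
lemma exists_growthLE_of_sphTail_dominated
    (htail : (fun t => sphMeasure a q μ (sphTail a t)) ≲[Ici 1] sphModel a q μ) :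
    ∃ ε, 0 < ε ∧ ε < q ∧ GrowthLE (-ε) (sphModel a q μ) := by
  have hb : 1 < 2 * κ + 2 := by linarith [ha.1]
  obtain ⟨C, hC⟩ := htail.trans (sphModel_dominated_sphMeasure_sphTail_sdiff hμ hq.le ha)
  obtain ⟨θ, hθ, hCθ⟩ := exists_lt_one_forall_le_mul_of_le_mul C
  have hstep (t : ℝ) (ht : 1 ≤ t) : sphMeasure a q μ (sphTail a ((2 * κ + 2) * t)) ≤
      θ * sphMeasure a q μ (sphTail a t) := by
    have hsub : sphTail a ((2 * κ + 2) * t) ⊆ sphTail a t :=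
      sphTail_antitone a (le_mul_of_one_le_left (one_pos.trans_le ht).le hb.le)
    have hsplit := measure_sdiff_add_inter (μ := sphMeasure a q μ) (sphTail a t)
      (measurableSet_sphTail a ((2 * κ + 2) * t))
    rw [inter_eq_right.2 hsub] at hsplit
    rw [← hsplit]
    exact hCθ _ _ (hsplit.trans_le (hC t ht))
  have hanti : Antitone fun t => sphMeasure a q μ (sphTail a t) :=
    fun _ _ h => measure_mono (sphTail_antitone a h)
  obtain ⟨ε, hε, hεq, hgrowth⟩ :=
    exists_growthLE_neg_of_antitoneOn (hanti.antitoneOn _) hb hθ hstep hq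
  exact ⟨ε, hε, hεq, hgrowth.congr htail (sphModel_dominated_sphMeasure_sphTail hμ hq.le ha)⟩

lemma sphTail_dominated_iff_exists_growthLE :
    (fun t => sphMeasure a q μ (sphTail a t)) ≲[Ici 1] sphModel a q μ ↔
      ∃ ε, 0 < ε ∧ ε < q ∧ GrowthLE (-ε) (sphModel a q μ) :=
  ⟨exists_growthLE_of_sphTail_dominated hμ ha hq,
    fun ⟨_, hε, _, hgrowth⟩ => sphTail_dominated_of_growthLE hμ hq hε hgrowth⟩

end GrowthOfTails

end SphericalizedMeasure

/-- If `X` is uniformly perfect at the base point `a` for radii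
`≥ 1` and `μ` is doubling on `X`, and `q > 0`, then `μ̂_q` is doubling on `(X̂, d̂)`
if and only if there exist `0 < s < q` and `C_s > 0` such that
`μ(B(a,r))/μ(B(a,R)) ≥ C_s (r/R)^s` whenever `1 ≤ r ≤ R < ∞`. -/
theorem statement16 [MetricSpace X] [MeasurableSpace X] [BorelSpace X]
    (hX : ¬ Bornology.IsBounded (Set.univ : Set X)) (a : X) (μ : Measure X)
    (hpos : ∀ (x : X) (r : ℝ), 0 < r → 0 < μ (Metric.ball x r))
    (hfin : ∀ (x : X) (r : ℝ), 0 < r → μ (Metric.ball x r) < ⊤)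
    (κ : ℝ) (hκ : 1 < κ)
    (hup : ∀ r : ℝ, 1 ≤ r → (Metric.ball a (κ * r) \ Metric.ball a r).Nonempty)
    (Cμ : ℝ) (hCμ : 1 < Cμ)
    (hdoub : ∀ (x : X) (r : ℝ), 0 < r →
      μ (Metric.ball x (2 * r)) ≤ ENNReal.ofReal Cμ * μ (Metric.ball x r))
    (q : ℝ) (hq : 0 < q) :
    (∃ Chat : ℝ, 1 < Chat ∧
      ∀ (x : Option X) (r : ℝ), 0 < r →
        sphMeas a q μ {y : Option X | sphHatDist a x y < 2 * r} ≤
          ENNReal.ofReal Chat * sphMeas a q μ {y : Option X | sphHatDist a x y < r}) ↔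
    (∃ s Cs : ℝ, 0 < s ∧ s < q ∧ 0 < Cs ∧
      ∀ r R : ℝ, 1 ≤ r → r ≤ R →
        ENNReal.ofReal (Cs * (r / R) ^ s) * μ (Metric.ball a R) ≤ μ (Metric.ball a r)) := by
  have hμ : IsDoubling fun (x : X) r => μ (ball x r) :=
    isDoubling_iff_exists_ofReal.2 ⟨Cμ, hCμ, hdoub⟩
  have ha : UniformlyPerfectAt a κ := ⟨hκ, hup⟩
  have := sigmaFinite_of_measure_ball_lt_top a (hfin a)
  calc _ ↔ IsDoubling fun (x : Option X) r => sphMeas a q μ {y | sphHatDist a x y < r} :=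
        isDoubling_iff_exists_ofReal.symm
    _ ↔ IsDoubling fun x r => sphMeasure a q μ (sphQuasiball a x r) := isDoubling_sphMeas_iff
    _ ↔ (fun t => sphMeasure a q μ (sphTail a t)) ≲[Ici 1] sphModel a q μ :=
        isDoubling_sphQuasiball_iff hμ ha hq.le
    _ ↔ ∃ ε, 0 < ε ∧ ε < q ∧ GrowthLE (-ε) (sphModel a q μ) :=
        sphTail_dominated_iff_exists_growthLE hμ ha hq
    _ ↔ ∃ s, 0 < s ∧ s < q ∧ GrowthLE s fun t => μ (ball a t) := exists_growthLE_sphModel_iff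
    _ ↔ _ := by simp only [growthLE_iff_exists_ofReal_mul_le, exists_and_left]
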